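/- Let η > 0 and t > 0, and let K_η(t,·) be the OST kernel. Then K_η(t,·) ∈ C¹(ℝ), and there exists a constant C_η > 0 depending only on η such that for all x ≠ 0, |∂_x K_η(t,x)| ≤ C_η e^{6ηt}/|x|³. -/

import Mathlib

open MeasureTheory

noncomputable def ostSymbol (η t ξ : ℝ) : ℂ :=
  Complex.exp (Complex.I * ((ξ ^ 3 * t : ℝ) : ℂ) - ((η * t * (|ξ| ^ 3 - |ξ|) : ℝ) : ℂ))

noncomputable def ostKernel (η t x : ℝ) : ℂ :=
  ∫ ξ : ℝ, Complex.exp (2 * Real.pi * Complex.I * ((x * ξ : ℝ) : ℂ)) * ostSymbol η t ξ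

/-!
Pairing `ξ` with `-ξ` gives `∂ₓK(t, x) = -4π Im J`, where
`J = ∫₀^∞ ξ exp(p ξ³ + (τ + c) ξ) dξ`, `c = 2πix`, `τ = ηt` and `p = (i/η - 1)τ`. Integrating the
factor `exp(c ξ)` by parts three times gives `J = 1/c² - (2τ + R)/c³`. The first term is real
because `c` is imaginary, so only the cubic term contributes. In `R` the third derivative of
`ξ exp(p ξ³ + τ ξ)` is a polynomial times the exponential, and scaling shows that each of its
monomials `τ ^ i ξ ^ j` contributes `O(τ ^ (i - (j + 1) / 3) exp τ)`. Every differentiation raises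
the weight `3i - j` by at least one, from `-1` for `ξ` to at least `2`, so all these powers of `τ`
are positive and are absorbed by enlarging the exponential rate.
-/

open Asymptotics ComplexConjugate Filter FourierTransform Polynomial Set Topology

/-- The exponential of a cubic polynomial without quadratic term: on `[0, ∞)` the OST symbol, times
any Fourier phase, has this form. -/
noncomputable def cubicExp (p q : ℂ) (x : ℝ) : ℂ :=
  Complex.exp (p * x ^ 3 + q * x)

/-- The operator `D` on polynomials given by `(P * cubicExp p q)' = D P * cubicExp p q`. -/
noncomputable def cubicDeriv (p q : ℂ) : ℂ[X] →ₗ[ℂ] ℂ[X] :=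
  derivative + LinearMap.mulLeft ℂ (C (3 * p) * X ^ 2 + C q)

section CubicExp

variable (p q : ℂ) (P : ℂ[X])

lemma continuous_cubicExp : Continuous (cubicExp p q) := by
  unfold cubicExp
  fun_prop

lemma norm_cubicExp (x : ℝ) :
    ‖cubicExp p q x‖ = Real.exp (p.re * x ^ 3 + q.re * x) := by
  rw [cubicExp, Complex.norm_exp, ← Complex.ofReal_pow, Complex.add_re, Complex.re_mul_ofReal,
    Complex.re_mul_ofReal]

lemma cubicDeriv_apply :
    cubicDeriv p q P = derivative P + (C (3 * p) * X ^ 2 + C q) * P :=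
  rfl

lemma cubicDeriv_add (c : ℂ) :
    cubicDeriv p (q + c) P = cubicDeriv p q P + C c * P := by
  simp only [cubicDeriv_apply, C_add]
  ring

lemma hasDerivAt_eval_mul_cubicExp (x : ℝ) :
    HasDerivAt (fun x : ℝ => P.eval (x : ℂ) * cubicExp p q x)
      ((cubicDeriv p q P).eval (x : ℂ) * cubicExp p q x) x := by
  have hphase : HasDerivAt (fun z : ℂ => p * z ^ 3 + q * z) (3 * p * x ^ 2 + q) x := by
    convert! ((hasDerivAt_pow 3 (x : ℂ)).const_mul p).add ((hasDerivAt_id (x : ℂ)).const_mul q)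
      using 1
    push_cast
    ring
  convert! ((P.hasDerivAt (x : ℂ)).mul hphase.cexp).comp_ofReal using 1
  simp only [cubicDeriv_apply, cubicExp, eval_add, eval_mul, eval_C, eval_pow, eval_X]
  ring

variable {p}

lemma cubicExp_isBigO_exp_neg (hp : p.re < 0) (b : ℝ) :
    cubicExp p q =O[atTop] fun x : ℝ => Real.exp (-b * x) := by
  have hlim : Tendsto (fun x : ℝ => p.re * x ^ 2 + (q.re + b)) atTop atBot :=
    tendsto_atBot_add_const_right _ _ ((tendsto_pow_atTop two_ne_zero).const_mul_atTop_of_neg hp)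
  refine IsBigO.of_bound 1 ?_
  filter_upwards [hlim.eventually_le_atBot 0, eventually_ge_atTop 0] with x hneg hx
  rw [norm_cubicExp, Real.norm_of_nonneg (Real.exp_nonneg _), one_mul, Real.exp_le_exp]
  nlinarith [mul_nonneg (neg_nonneg.2 hneg) hx]

lemma eval_ofReal_isBigO_exp : (fun x : ℝ => P.eval (x : ℂ)) =O[atTop] Real.exp := by
  induction P using Polynomial.induction_on' with
  | add P Q hP hQ => simpa only [eval_add] using hP.add hQ
  | monomial n a =>
    simp only [eval_monomial]
    have hpow : (fun x : ℝ => (x : ℂ) ^ n) =O[atTop] fun x : ℝ => x ^ n :=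
      isBigO_of_le _ fun x => by simp
    exact (hpow.trans Real.isLittleO_pow_exp_atTop.isBigO).const_mul_left a

lemma eval_mul_cubicExp_isBigO_exp_neg (hp : p.re < 0) :
    (fun x : ℝ => P.eval (x : ℂ) * cubicExp p q x) =O[atTop] fun x : ℝ => Real.exp (-1 * x) := by
  refine ((eval_ofReal_isBigO_exp P).mul (cubicExp_isBigO_exp_neg q hp 2)).congr_right fun x => ?_
  rw [← Real.exp_add]
  ring_nf

lemma integrableOn_eval_mul_cubicExp (hp : p.re < 0) :
    IntegrableOn (fun x : ℝ => P.eval (x : ℂ) * cubicExp p q x) (Ioi 0) := by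
  have hcont : Continuous fun x : ℝ => P.eval (x : ℂ) * cubicExp p q x :=
    (P.continuous.comp Complex.continuous_ofReal).mul (continuous_cubicExp p q)
  exact (integrable_norm_iff hcont.aestronglyMeasurable).1 <| integrable_of_isBigO_exp_neg one_pos
    hcont.norm.continuousOn (eval_mul_cubicExp_isBigO_exp_neg q P hp).norm_left

lemma tendsto_eval_mul_cubicExp_atTop (hp : p.re < 0) :
    Tendsto (fun x : ℝ => P.eval (x : ℂ) * cubicExp p q x) atTop (𝓝 0) := by
  refine (eval_mul_cubicExp_isBigO_exp_neg q P hp).trans_tendsto ?_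
  simpa only [neg_one_mul] using Real.tendsto_exp_neg_atTop_nhds_zero

lemma integral_cubicDeriv_mul_cubicExp (hp : p.re < 0) :
    ∫ x in Ioi (0 : ℝ), (cubicDeriv p q P).eval (x : ℂ) * cubicExp p q x = -P.eval 0 := by
  rw [integral_Ioi_of_hasDerivAt_of_tendsto' (fun x _ => hasDerivAt_eval_mul_cubicExp p q P x)
    (integrableOn_eval_mul_cubicExp q _ hp) (tendsto_eval_mul_cubicExp_atTop q P hp)]
  simp [cubicExp]

lemma mul_integral_eval_mul_cubicExp (hp : p.re < 0) (c : ℂ) :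
    c * ∫ x in Ioi (0 : ℝ), P.eval (x : ℂ) * cubicExp p (q + c) x =
      -P.eval 0 - ∫ x in Ioi (0 : ℝ), (cubicDeriv p q P).eval (x : ℂ) * cubicExp p (q + c) x := by
  rw [eq_sub_iff_add_eq', ← integral_cubicDeriv_mul_cubicExp (q + c) P hp, ← integral_const_mul,
    ← integral_add (integrableOn_eval_mul_cubicExp _ _ hp)
      ((integrableOn_eval_mul_cubicExp _ _ hp).const_mul c)]
  simp only [cubicDeriv_add, eval_add, eval_mul, eval_C, add_mul, mul_assoc]

lemma pow_three_mul_integral_mul_cubicExp (hp : p.re < 0) (c : ℂ) :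
    c ^ 3 * ∫ x in Ioi (0 : ℝ), (x : ℂ) * cubicExp p (q + c) x =
      c - (2 * q + ∫ x in Ioi (0 : ℝ),
        ((cubicDeriv p q)^[3] X).eval (x : ℂ) * cubicExp p (q + c) x) := by
  have h₀ := mul_integral_eval_mul_cubicExp q X hp c
  have h₁ := mul_integral_eval_mul_cubicExp q (cubicDeriv p q X) hp c
  have h₂ := mul_integral_eval_mul_cubicExp q (cubicDeriv p q (cubicDeriv p q X)) hp c
  have hjet₁ : (cubicDeriv p q X).eval 0 = 1 := by simp [cubicDeriv_apply]
  have hjet₂ : (cubicDeriv p q (cubicDeriv p q X)).eval 0 = 2 * q := by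
    simp [cubicDeriv_apply, two_mul]
  rw [eval_X] at h₀
  rw [hjet₁] at h₁
  rw [hjet₂] at h₂
  simp only [eval_X] at h₀
  simp only [Function.iterate_succ_apply, Function.iterate_zero_apply]
  linear_combination c ^ 2 * h₀ - c * h₁ + h₂

end CubicExp

lemma rpow_le_mul_exp {s c t : ℝ} (hs : 0 ≤ s) (hc : 0 < c) (ht : 0 ≤ t) :
    t ^ s ≤ ((s + 1) / c) ^ s * Real.exp (c * t) := by
  set y := c * t / (s + 1) with hy
  have hy0 : 0 ≤ y := by positivity
  have hys : y * s ≤ c * t := by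
    rw [hy, div_mul_eq_mul_div, div_le_iff₀ (by positivity)]
    nlinarith [mul_nonneg hc.le ht]
  calc t ^ s = ((s + 1) / c) ^ s * y ^ s := by
        rw [← Real.mul_rpow (by positivity) hy0, hy]
        congr 1
        field_simp
    _ ≤ ((s + 1) / c) ^ s * Real.exp y ^ s := by
        gcongr
        linarith [Real.add_one_le_exp y]
    _ ≤ ((s + 1) / c) ^ s * Real.exp (c * t) := by
        rw [← Real.exp_mul]
        gcongr

lemma integral_pow_mul_exp_cubic_le {τ : ℝ} (hτ : 0 < τ) (j : ℕ) :
    ∫ x in Ioi (0 : ℝ), x ^ j * Real.exp (τ * (x - x ^ 3)) ≤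
      Real.exp τ * ((τ / 2) ^ (-(j + 1) / 3 : ℝ) * (1 / 3) * Real.Gamma ((j + 1) / 3)) := by
  have hj : (-1 : ℝ) < j := by linarith [j.cast_nonneg (α := ℝ)]
  rw [← integral_rpow_mul_exp_neg_mul_rpow three_pos hj (half_pos hτ), ← integral_const_mul]
  refine integral_mono_of_nonneg ?_ ((integrableOn_rpow_mul_exp_neg_mul_rpow hj three_pos
    (half_pos hτ)).const_mul _) ?_
  · filter_upwards [ae_restrict_mem measurableSet_Ioi] with x (hx : 0 < x)
    simp only [Pi.zero_apply]
    positivity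
  filter_upwards [ae_restrict_mem measurableSet_Ioi] with x (hx : 0 < x)
  have hcubic : x - x ^ 3 ≤ 1 - x ^ 3 / 2 := by
    nlinarith [mul_nonneg hx.le (sq_nonneg (x - 1)), sq_nonneg (x - 1), sq_nonneg (x - 1 / 2)]
  have hpow : x ^ (3 : ℝ) = x ^ 3 := by exact_mod_cast Real.rpow_natCast x 3
  rw [Real.rpow_natCast, hpow, mul_left_comm, ← Real.exp_add]
  gcongr
  linarith [mul_le_mul_of_nonneg_left hcubic hτ.le]

lemma exists_pow_mul_integral_pow_mul_exp_cubic_le {β : ℝ} (hβ : 1 < β) {i j : ℕ}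
    (hij : j + 1 ≤ 3 * i) :
    ∃ K, ∀ τ > 0, τ ^ i * ∫ x in Ioi (0 : ℝ), x ^ j * Real.exp (τ * (x - x ^ 3)) ≤
      K * Real.exp (β * τ) := by
  set s : ℝ := i - (j + 1) / 3 with hs_def
  have hs : 0 ≤ s := by
    have : (j + 1 : ℝ) ≤ 3 * i := by exact_mod_cast hij
    linarith
  set G : ℝ := 2⁻¹ ^ (-(j + 1) / 3 : ℝ) * (1 / 3) * Real.Gamma ((j + 1) / 3)
  have : 0 ≤ G := by
    have := Real.Gamma_pos_of_pos (s := ((j : ℝ) + 1) / 3) (by positivity)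
    positivity
  refine ⟨G * ((s + 1) / (β - 1)) ^ s, fun τ hτ => ?_⟩
  calc τ ^ i * ∫ x in Ioi (0 : ℝ), x ^ j * Real.exp (τ * (x - x ^ 3))
      ≤ τ ^ i * (Real.exp τ *
          ((τ / 2) ^ (-(j + 1) / 3 : ℝ) * (1 / 3) * Real.Gamma ((j + 1) / 3))) := by
        gcongr
        exact integral_pow_mul_exp_cubic_le hτ j
    _ = G * τ ^ s * Real.exp τ := by
        rw [div_eq_mul_inv τ, Real.mul_rpow hτ.le (by positivity), hs_def, sub_eq_add_neg,
          Real.rpow_add hτ, Real.rpow_natCast, ← neg_div]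
        ring
    _ ≤ G * (((s + 1) / (β - 1)) ^ s * Real.exp ((β - 1) * τ)) * Real.exp τ := by
        gcongr
        exact rpow_le_mul_exp hs (sub_pos.2 hβ) hτ.le
    _ = G * ((s + 1) / (β - 1)) ^ s * Real.exp (β * τ) := by
        rw [show β * τ = (β - 1) * τ + τ by ring, Real.exp_add]
        ring

/-- Families of polynomials in `x`, depending polynomially on `τ`, all of whose monomials
`τ ^ i * x ^ j` have weight `3 * i - j` at least `w`. The weight measures homogeneity under the
scaling `τ ↦ r ^ 3 * τ`, `x ↦ r⁻¹ * x`, which preserves `τ * x ^ 3`. -/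
noncomputable def weightFiltration (w : ℤ) : Submodule ℂ (ℝ → ℂ[X]) :=
  Submodule.span ℂ {F | ∃ i j : ℕ, w ≤ 3 * i - j ∧ F = fun τ : ℝ => monomial j ((τ : ℂ) ^ i)}

lemma monomial_mem_weightFiltration {w : ℤ} {i j : ℕ} (hw : w ≤ 3 * i - j) :
    (fun τ : ℝ => monomial j ((τ : ℂ) ^ i)) ∈ weightFiltration w :=
  Submodule.subset_span ⟨i, j, hw, rfl⟩

lemma cubicDeriv_mem_weightFiltration (a : ℂ) {w : ℤ} {F : ℝ → ℂ[X]}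
    (hF : F ∈ weightFiltration w) :
    (fun τ : ℝ => cubicDeriv (a * τ) τ (F τ)) ∈ weightFiltration (w + 1) := by
  induction hF using Submodule.span_induction with
  | mem F hF =>
    obtain ⟨i, j, hw, rfl⟩ := hF
    have hderiv : (j : ℂ) • (fun τ : ℝ => monomial (j - 1) ((τ : ℂ) ^ i)) ∈
        weightFiltration (w + 1) := by
      rcases j with _ | j
      · simp
      · exact Submodule.smul_mem _ _ (monomial_mem_weightFiltration (by push_cast at hw ⊢; omega))
    have hcube : (3 * a) • (fun τ : ℝ => monomial (j + 2) ((τ : ℂ) ^ (i + 1))) ∈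
        weightFiltration (w + 1) :=
      Submodule.smul_mem _ _ (monomial_mem_weightFiltration (by push_cast; omega))
    have hlin : (fun τ : ℝ => monomial j ((τ : ℂ) ^ (i + 1))) ∈ weightFiltration (w + 1) :=
      monomial_mem_weightFiltration (by push_cast; omega)
    convert add_mem hderiv (add_mem hcube hlin) using 1
    ext1 τ
    simp only [cubicDeriv_apply, Pi.add_apply, Pi.smul_apply, derivative_monomial, add_mul,
      C_mul_X_pow_eq_monomial, monomial_mul_monomial, C_mul_monomial, smul_monomial, smul_eq_mul]
    ring_nf
  | zero => simpa only [Pi.zero_def, map_zero] using zero_mem (weightFiltration (w + 1))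
  | add F G _ _ hF hG => simpa only [Pi.add_def, map_add] using add_mem hF hG
  | smul z F _ hF => simpa only [Pi.smul_def, map_smul] using Submodule.smul_mem _ z hF

lemma iterate_cubicDeriv_mem_weightFiltration (a : ℂ) {w : ℤ} {F : ℝ → ℂ[X]}
    (hF : F ∈ weightFiltration w) (n : ℕ) :
    (fun τ : ℝ => (cubicDeriv (a * τ) τ)^[n] (F τ)) ∈ weightFiltration (w + n) := by
  induction n with
  | zero => simpa using hF
  | succ n ih =>
    simpa only [Function.iterate_succ_apply', Nat.cast_succ, add_assoc] using
      cubicDeriv_mem_weightFiltration a ih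

section WeightBound

variable {a : ℂ} {β : ℝ}

lemma exists_integral_norm_eval_mul_cubicExp_le (ha : a.re = -1) (hβ : 1 < β)
    {w : ℤ} (hw : 1 ≤ w) {F : ℝ → ℂ[X]} (hF : F ∈ weightFiltration w) :
    ∃ K, ∀ τ > 0, ∫ x in Ioi (0 : ℝ), ‖(F τ).eval (x : ℂ) * cubicExp (a * τ) τ x‖ ≤
      K * Real.exp (β * τ) := by
  have hint {τ : ℝ} (hτ : 0 < τ) (P : ℂ[X]) :
      IntegrableOn (fun x : ℝ => ‖P.eval (x : ℂ) * cubicExp (a * τ) τ x‖) (Ioi 0) :=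
    (integrableOn_eval_mul_cubicExp _ P (by simp [ha, hτ])).norm
  induction hF using Submodule.span_induction with
  | mem F hF =>
    obtain ⟨i, j, hij, rfl⟩ := hF
    obtain ⟨K, hK⟩ := exists_pow_mul_integral_pow_mul_exp_cubic_le hβ (i := i) (j := j) (by omega)
    refine ⟨K, fun τ hτ => (le_of_eq ?_).trans (hK τ hτ)⟩
    rw [← integral_const_mul]
    refine setIntegral_congr_fun measurableSet_Ioi fun x (hx : 0 < x) => ?_
    have hexp : (a * τ).re * x ^ 3 + (τ : ℂ).re * x = τ * (x - x ^ 3) := by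
      rw [Complex.re_mul_ofReal, ha, Complex.ofReal_re]
      ring
    simp only [eval_monomial, norm_mul, norm_pow, Complex.norm_real, norm_cubicExp, hexp,
      Real.norm_of_nonneg hτ.le, Real.norm_of_nonneg hx.le, mul_assoc]
  | zero => exact ⟨0, by simp⟩
  | add F G _ _ hF hG =>
    obtain ⟨K, hK⟩ := hF
    obtain ⟨L, hL⟩ := hG
    refine ⟨K + L, fun τ hτ => ?_⟩
    rw [add_mul]
    refine le_trans ?_ (add_le_add (hK τ hτ) (hL τ hτ))
    rw [← integral_add (hint hτ _) (hint hτ _)]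
    refine integral_mono (hint hτ _) ((hint hτ _).add (hint hτ _)) fun x => ?_
    simp only [Pi.add_apply, eval_add, add_mul]
    exact norm_add_le _ _
  | smul z F _ hF =>
    obtain ⟨K, hK⟩ := hF
    refine ⟨‖z‖ * K, fun τ hτ => ?_⟩
    simp only [Pi.smul_apply, eval_smul, smul_eq_mul, mul_assoc, norm_mul z, integral_const_mul]
    gcongr
    exact hK τ hτ

lemma exists_norm_integral_mul_cubicExp_sub_le (ha : a.re = -1) (hβ : 1 < β) :
    ∃ K > 0, ∀ τ > (0 : ℝ), ∀ c : ℂ, c.re = 0 → c ≠ 0 →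
      ‖(∫ x in Ioi (0 : ℝ), (x : ℂ) * cubicExp (a * τ) (τ + c) x) - 1 / c ^ 2‖ ≤
        K * Real.exp (β * τ) / ‖c‖ ^ 3 := by
  have hX : (fun _ : ℝ => (X : ℂ[X])) ∈ weightFiltration (-1) := by
    simpa [monomial_one_one_eq_X] using monomial_mem_weightFiltration (i := 0) (j := 1) le_rfl
  obtain ⟨K, hK⟩ := exists_integral_norm_eval_mul_cubicExp_le ha hβ (by norm_num)
    (iterate_cubicDeriv_mem_weightFiltration a hX 3)
  refine ⟨2 + |K|, by positivity, fun τ hτ c hc hc0 => ?_⟩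
  set R := ∫ x in Ioi (0 : ℝ),
    ((cubicDeriv (a * τ) τ)^[3] X).eval (x : ℂ) * cubicExp (a * τ) (τ + c) x
  have hparts : (∫ x in Ioi (0 : ℝ), (x : ℂ) * cubicExp (a * τ) (τ + c) x) - 1 / c ^ 2 =
      -(2 * τ + R) / c ^ 3 := by
    have h := pow_three_mul_integral_mul_cubicExp (p := a * τ) τ (by simp [ha, hτ]) c
    field_simp
    linear_combination h
  have hR : ‖R‖ ≤ |K| * Real.exp (β * τ) := by
    refine (norm_integral_le_integral_norm _).trans ?_
    simp only [norm_mul, norm_cubicExp, Complex.add_re, hc, add_zero]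
    simp only [norm_mul, norm_cubicExp] at hK
    exact (hK τ hτ).trans (by gcongr; exact le_abs_self K)
  have hτexp : τ ≤ Real.exp (β * τ) := by
    nlinarith [Real.add_one_le_exp (β * τ)]
  rw [hparts, norm_div, norm_neg, norm_pow]
  gcongr
  calc ‖2 * τ + R‖ ≤ ‖(2 * τ : ℂ)‖ + ‖R‖ := norm_add_le _ _
    _ = 2 * τ + ‖R‖ := by simp [abs_of_pos hτ]
    _ ≤ (2 + |K|) * Real.exp (β * τ) := by linarith

lemma exists_abs_im_integral_mul_cubicExp_le (ha : a.re = -1) (hβ : 1 < β) :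
    ∃ K > 0, ∀ τ > (0 : ℝ), ∀ y : ℝ, y ≠ 0 →
      |(∫ x in Ioi (0 : ℝ), (x : ℂ) * cubicExp (a * τ) (τ + y * Complex.I) x).im| ≤
        K * Real.exp (β * τ) / |y| ^ 3 := by
  obtain ⟨K, hK0, hK⟩ := exists_norm_integral_mul_cubicExp_sub_le ha hβ
  refine ⟨K, hK0, fun τ hτ y hy => ?_⟩
  have him : (1 / (y * Complex.I) ^ 2).im = 0 := by
    rw [mul_pow, Complex.I_sq, mul_neg_one, ← Complex.ofReal_pow, ← Complex.ofReal_neg,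
      ← Complex.ofReal_one, ← Complex.ofReal_div, Complex.ofReal_im]
  have hbound := hK τ hτ (y * Complex.I) (by simp) (by simp [hy])
  rw [norm_mul, Complex.norm_I, mul_one, Complex.norm_real, Real.norm_eq_abs] at hbound
  simpa only [Complex.sub_im, him, sub_zero] using (Complex.abs_im_le_norm _).trans hbound

end WeightBound

lemma integral_eq_im_integral_Ioi_of_neg_eq_neg_conj {f : ℝ → ℂ} (hf : Integrable f)
    (hconj : ∀ x, f (-x) = -conj (f x)) :
    ∫ x, f x = (2 * (∫ x in Ioi 0, f x).im : ℝ) * Complex.I := by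
  have hIic : ∫ x in Iic 0, f x = -conj (∫ x in Ioi 0, f x) := by
    rw [← neg_zero, ← integral_comp_neg_Ioi, neg_zero, ← integral_conj, ← integral_neg]
    simp only [hconj]
  rw [← intervalIntegral.integral_Iic_add_Ioi hf.integrableOn hf.integrableOn, hIic,
    ← Complex.sub_conj, sub_eq_neg_add]

section Kernel

variable (η t : ℝ)

lemma continuous_ostSymbol : Continuous (ostSymbol η t) := by
  unfold ostSymbol
  fun_prop

lemma ostSymbol_neg (ξ : ℝ) : ostSymbol η t (-ξ) = conj (ostSymbol η t ξ) := by
  simp only [ostSymbol, ← Complex.exp_conj, map_sub, map_mul, Complex.conj_I, Complex.conj_ofReal,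
    abs_neg]
  push_cast
  ring_nf

lemma ostKernel_eq_fourier_comp_neg :
    ostKernel η t = 𝓕 (ostSymbol η t) ∘ Neg.neg := by
  ext x
  rw [Function.comp_apply, Real.fourier_real_eq_integral_exp_smul, ostKernel]
  congr 1 with ξ
  rw [smul_eq_mul]
  congr 2
  push_cast
  ring

variable {η t}

lemma ostSymbol_of_nonneg (hη : η ≠ 0) {ξ : ℝ} (hξ : 0 ≤ ξ) :
    ostSymbol η t ξ = cubicExp ((Complex.I / η - 1) * (η * t : ℝ)) (η * t : ℝ) ξ := by
  have hη' : (η : ℂ) ≠ 0 := by exact_mod_cast hη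
  rw [ostSymbol, cubicExp, abs_of_nonneg hξ]
  congr 1
  push_cast
  field_simp
  ring

lemma integrable_pow_mul_ostSymbol (hη : 0 < η) (ht : 0 < t) (n : ℕ) :
    Integrable fun ξ : ℝ => (ξ : ℂ) ^ n * ostSymbol η t ξ := by
  have hcont : Continuous fun ξ : ℝ => (ξ : ℂ) ^ n * ostSymbol η t ξ := by
    have := continuous_ostSymbol η t
    fun_prop
  have hdecay : (fun ξ : ℝ => (ξ : ℂ) ^ n * ostSymbol η t ξ) =O[atTop]
      fun ξ : ℝ => Real.exp (-1 * ξ) := by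
    refine (eval_mul_cubicExp_isBigO_exp_neg (p := (Complex.I / η - 1) * (η * t : ℝ))
      (η * t : ℝ) (X ^ n) ?_).congr' ?_ EventuallyEq.rfl
    · simpa using mul_pos hη ht
    · filter_upwards [eventually_ge_atTop 0] with ξ hξ
      rw [ostSymbol_of_nonneg hη.ne' hξ, eval_pow, eval_X]
  refine hcont.locallyIntegrable.integrable_of_isBigO_atTop_of_norm_isNegInvariant ?_ hdecay
    ⟨Ioi 0, Ioi_mem_atTop 0, exp_neg_integrableOn_Ioi 0 one_pos⟩
  exact Eventually.of_forall fun ξ => by simp [ostSymbol_neg]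

lemma contDiff_ostKernel (hη : 0 < η) (ht : 0 < t) {n : ℕ∞} : ContDiff ℝ n (ostKernel η t) := by
  have hfourier : ContDiff ℝ n (𝓕 (ostSymbol η t)) := by
    refine Real.contDiff_fourier fun n _ => ?_
    simpa only [norm_mul, norm_pow, Complex.norm_real] using
      (integrable_pow_mul_ostSymbol hη ht n).norm
  simpa only [ostKernel_eq_fourier_comp_neg] using hfourier.comp contDiff_neg

lemma deriv_ostKernel_eq_integral (hη : 0 < η) (ht : 0 < t) (x : ℝ) :
    deriv (ostKernel η t) x = 2 * Real.pi * Complex.I *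
      ∫ ξ : ℝ, ξ * (Complex.exp ((2 * Real.pi * x : ℝ) * Complex.I * ξ) * ostSymbol η t ξ) := by
  have hint₀ : Integrable (ostSymbol η t) := by
    simpa using integrable_pow_mul_ostSymbol hη ht 0
  have hint₁ : Integrable fun ξ : ℝ => ξ • ostSymbol η t ξ := by
    simpa using integrable_pow_mul_ostSymbol hη ht 1
  rw [ostKernel_eq_fourier_comp_neg, Function.comp_def, deriv_comp_neg,
    Real.deriv_fourier hint₀ hint₁, Real.fourier_real_eq_integral_exp_smul, ← integral_neg,
    ← integral_const_mul]
  congr 1 with ξ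
  have hphase : ((-2 * Real.pi * ξ * -x : ℝ) : ℂ) * Complex.I =
      (2 * Real.pi * x : ℝ) * Complex.I * ξ := by
    push_cast
    ring
  rw [hphase, smul_eq_mul, smul_eq_mul]
  ring

lemma deriv_ostKernel (hη : 0 < η) (ht : 0 < t) (x : ℝ) :
    deriv (ostKernel η t) x = (-(4 * Real.pi *
      (∫ ξ in Ioi (0 : ℝ), ξ * cubicExp ((Complex.I / η - 1) * (η * t : ℝ))
        ((η * t : ℝ) + (2 * Real.pi * x : ℝ) * Complex.I) ξ).im) : ℝ) := by
  set c : ℂ := (2 * Real.pi * x : ℝ) * Complex.I with hc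
  set J := ∫ ξ in Ioi (0 : ℝ), ξ * cubicExp ((Complex.I / η - 1) * (η * t : ℝ)) ((η * t : ℝ) + c) ξ
  set f : ℝ → ℂ := fun ξ => ξ * (Complex.exp (c * ξ) * ostSymbol η t ξ) with hf
  have hexp_conj (ξ : ℝ) : Complex.exp (c * (-ξ : ℝ)) = conj (Complex.exp (c * ξ)) := by
    rw [← Complex.exp_conj]
    simp [hc, map_ofNat]
  have hint : Integrable f := by
    have hcont := continuous_ostSymbol η t
    refine (integrable_pow_mul_ostSymbol hη ht 1).mono (by fun_prop) (ae_of_all _ fun ξ => ?_)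
    simp [hf, hc, Complex.norm_exp]
  have hconj (ξ : ℝ) : f (-ξ) = -conj (f ξ) := by
    simp only [hf, hexp_conj, ostSymbol_neg, map_mul, Complex.conj_ofReal]
    push_cast
    ring
  have hhalf : ∫ ξ in Ioi 0, f ξ = J := by
    refine setIntegral_congr_fun measurableSet_Ioi fun ξ (hξ : 0 < ξ) => ?_
    simp only [hf, ostSymbol_of_nonneg hη.ne' hξ.le, cubicExp, ← Complex.exp_add]
    ring_nf
  rw [deriv_ostKernel_eq_integral hη ht, integral_eq_im_integral_Ioi_of_neg_eq_neg_conj hint hconj,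
    hhalf]
  push_cast
  linear_combination (4 * Real.pi * J.im : ℂ) * Complex.I_sq

end Kernel

theorem stmt12_general {η β : ℝ} (hη : 0 < η) (hβ : 1 < β) :
    ∃ K > (0 : ℝ), ∀ t : ℝ, 0 < t →
      (∀ n : ℕ∞, ContDiff ℝ n fun x : ℝ => ostKernel η t x) ∧
      ∀ x : ℝ, x ≠ 0 →
        ‖deriv (fun x : ℝ => ostKernel η t x) x‖ ≤ K * Real.exp (β * η * t) / |x| ^ 3 := by
  obtain ⟨K, hK0, hK⟩ :=
    exists_abs_im_integral_mul_cubicExp_le (a := Complex.I / η - 1) (by simp) hβ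
  refine ⟨K / (2 * Real.pi ^ 2), by positivity, fun t ht =>
    ⟨fun n => contDiff_ostKernel hη ht, fun x hx => ?_⟩⟩
  set J := ∫ ξ in Ioi (0 : ℝ), ξ * cubicExp ((Complex.I / η - 1) * (η * t : ℝ))
    ((η * t : ℝ) + (2 * Real.pi * x : ℝ) * Complex.I) ξ
  have hx' : 2 * Real.pi * x ≠ 0 := mul_ne_zero (by positivity) hx
  have hJ : |J.im| ≤ K * Real.exp (β * (η * t)) / |2 * Real.pi * x| ^ 3 :=
    hK _ (mul_pos hη ht) _ hx'
  calc ‖deriv (ostKernel η t) x‖ = 4 * Real.pi * |J.im| := by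
        rw [deriv_ostKernel hη ht, Complex.norm_real, norm_neg, norm_mul,
          Real.norm_of_nonneg (by positivity), Real.norm_eq_abs]
    _ ≤ 4 * Real.pi * (K * Real.exp (β * (η * t)) / |2 * Real.pi * x| ^ 3) := by gcongr
    _ = K / (2 * Real.pi ^ 2) * Real.exp (β * η * t) / |x| ^ 3 := by
        rw [abs_mul, abs_of_pos Real.two_pi_pos, mul_assoc β]
        field_simp
        ring

theorem stmt12 : ∀ η : ℝ, 0 < η → ∃ C > (0:ℝ), ∀ t : ℝ, 0 < t →
    ContDiff ℝ 1 (fun x : ℝ => ostKernel η t x) ∧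
    ∀ x : ℝ, x ≠ 0 →
      ‖deriv (fun x : ℝ => ostKernel η t x) x‖ ≤ C * Real.exp (6 * η * t) / |x| ^ 3 := by
  intro η hη
  obtain ⟨C, hC0, hC⟩ := stmt12_general hη (by norm_num : (1 : ℝ) < 6)
  exact ⟨C, hC0, fun t ht => ⟨(hC t ht).1 1, (hC t ht).2⟩⟩
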